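/- arXiv:2511.20929 — 2 statements merged into one kernel-verified Lean document; each statement's English description precedes it below -/
import Mathlib

section
/- Let μ be a DNS satisfaction function. For every PB instance with budget b, minimum project cost c_min and maximum project cost c_max, the outcome P_M of MES_μ completed by Greedy_μ (both breaking ties by the same fixed linear order on projects) satisfies uw_μ(P_M) ≥ (2·√(c_min/b) − (c_min + c_max)/b) · uw_μ(P*) for every feasible outcome P* ⊆ P; i.e., MES_μ completed by Greedy_μ has utilitarian guarantee 2·√(c_min/b) − (c_min + c_max)/b. -/
open Finset
open scoped Classical

noncomputable section

/-- A participatory budgeting (PB) instance. -/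
structure PB (π ν : Type) where
  projs : Finset π
  voters : Finset ν
  approves : ν → Finset π
  cost : π → ℝ
  budget : ℝ
  projs_nonempty : projs.Nonempty
  budget_pos : 0 < budget
  cost_pos : ∀ p ∈ projs, 0 < cost p
  cost_le_budget : ∀ p ∈ projs, cost p ≤ budget
  approves_subset : ∀ i ∈ voters, approves i ⊆ projs

/-- A satisfaction function assigns a positive value to each positive cost. -/
def IsSat (μ : ℝ → ℝ) : Prop := ∀ t : ℝ, 0 < t → 0 < μ t

/-- A DNS function: weakly increasing, with weakly decreasing satisfaction per unit cost. -/
def IsDNS (μ : ℝ → ℝ) : Prop :=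
  IsSat μ ∧ (∀ s t : ℝ, 0 < s → s ≤ t → μ s ≤ μ t) ∧
    (∀ s t : ℝ, 0 < s → s ≤ t → μ t / t ≤ μ s / s)

namespace PB

variable {π ν : Type}

/-- Supporters of a project. -/
def supp (I : PB π ν) (p : π) : Finset ν := I.voters.filter (fun i => p ∈ I.approves i)

/-- Total cost of a set of projects. -/
def costOf (I : PB π ν) (S : Finset π) : ℝ := ∑ p ∈ S, I.cost p

/-- A feasible outcome. -/
def feasibleSet (I : PB π ν) (S : Finset π) : Prop := S ⊆ I.projs ∧ I.costOf S ≤ I.budget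

/-- Minimum project cost. -/
def cmin (I : PB π ν) : ℝ := I.projs.inf' I.projs_nonempty I.cost

/-- Maximum project cost. -/
def cmax (I : PB π ν) : ℝ := I.projs.sup' I.projs_nonempty I.cost

/-- Utilitarian welfare of a set of projects. -/
def uw (I : PB π ν) (μ : ℝ → ℝ) (S : Finset π) : ℝ :=
  ∑ p ∈ S, ((I.supp p).card : ℝ) * μ (I.cost p)

/-- The value ("bang per buck") of a project. -/
def projVal (I : PB π ν) (μ : ℝ → ℝ) (p : π) : ℝ :=
  ((I.supp p).card : ℝ) * μ (I.cost p) / I.cost p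

/-- Satisfaction of voter `i` from an outcome. -/
def satOf (I : PB π ν) (μ : ℝ → ℝ) (i : ν) (S : Finset π) : ℝ :=
  ∑ p ∈ S ∩ I.approves i, μ (I.cost p)

/-- Minimum satisfaction of a project in the instance. -/
def muMin (I : PB π ν) (μ : ℝ → ℝ) : ℝ :=
  I.projs.inf' I.projs_nonempty (fun p => μ (I.cost p))

/-- Maximum satisfaction of a project in the instance. -/
def muMax (I : PB π ν) (μ : ℝ → ℝ) : ℝ :=
  I.projs.sup' I.projs_nonempty (fun p => μ (I.cost p))

/-- The maximal utilitarian welfare over feasible outcomes. -/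
def maxUW (I : PB π ν) (μ : ℝ → ℝ) : ℝ :=
  (I.projs.powerset.filter (fun S => I.costOf S ≤ I.budget)).sup'
    ⟨∅, Finset.mem_filter.mpr ⟨Finset.empty_mem_powerset _,
      by simpa [PB.costOf] using I.budget_pos.le⟩⟩
    (I.uw μ)

/-- A group `N'` is `T`-cohesive. -/
def cohesive (I : PB π ν) (N' : Finset ν) (T : Finset π) : Prop :=
  N' ⊆ I.voters ∧ T ⊆ I.projs ∧ (∀ i ∈ N', T ⊆ I.approves i) ∧
    I.costOf T ≤ ((N'.card : ℝ) / (I.voters.card : ℝ)) * I.budget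

/-- Extended justified representation up to one project w.r.t. `μ`. -/
def EJR1 (I : PB π ν) (μ : ℝ → ℝ) (W : Finset π) : Prop :=
  ∀ N' T, I.cohesive N' T →
    T ⊆ W ∨ ∃ i ∈ N', ∃ p ∈ I.approves i, p ∉ W ∧
      I.satOf μ i W + μ (I.cost p) > I.satOf μ i T

/-- Pick the element of maximal `f`-value, breaking ties by the linear order. -/
def pickMax [LinearOrder π] (f : π → ℝ) (S : Finset π) (h : S.Nonempty) : π :=
  (S.filter (fun p => ∀ q ∈ S, f q ≤ f p)).min' (by
    obtain ⟨p, hp, hm⟩ := S.exists_max_image f h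
    exact ⟨p, Finset.mem_filter.mpr ⟨hp, hm⟩⟩)

/-- Pick the element of minimal `f`-value, breaking ties by the linear order. -/
def pickMin [LinearOrder π] (f : π → ℝ) (S : Finset π) (h : S.Nonempty) : π :=
  (S.filter (fun p => ∀ q ∈ S, f p ≤ f q)).min' (by
    obtain ⟨p, hp, hm⟩ := S.exists_min_image f h
    exact ⟨p, Finset.mem_filter.mpr ⟨hp, hm⟩⟩)

section Greedy

variable [LinearOrder π]

/-- One choice of the greedy rule: among the unchosen affordable projects, the one of
maximum value (ties broken by the linear order); `none` if no project is affordable. -/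
def greedyStep (I : PB π ν) (μ : ℝ → ℝ) (rem : Finset π) (budg : ℝ) : Option π :=
  if h : (rem.filter (fun p => I.cost p ≤ budg)).Nonempty then
    some (pickMax (I.projVal μ) (rem.filter (fun p => I.cost p ≤ budg)) h)
  else none

/-- The (ordered) list of projects chosen by the greedy rule, with fuel. -/
def greedyAux (I : PB π ν) (μ : ℝ → ℝ) : ℕ → Finset π → ℝ → List π
  | 0, _, _ => []
  | (k+1), rem, budg =>
    match I.greedyStep μ rem budg with
    | none => []
    | some p => p :: greedyAux I μ k (rem.erase p) (budg - I.cost p)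

/-- The projects chosen by `Greedy_μ`, in order of selection. -/
def greedySeq (I : PB π ν) (μ : ℝ → ℝ) : List π :=
  greedyAux I μ I.projs.card I.projs I.budget

/-- The outcome of the greedy rule started from a set `rem` of unchosen projects
with remaining budget `budg`. -/
def greedyFrom (I : PB π ν) (μ : ℝ → ℝ) (rem : Finset π) (budg : ℝ) : Finset π :=
  (greedyAux I μ rem.card rem budg).toFinset

/-- The outcome of `Greedy_μ`. -/
def greedy (I : PB π ν) (μ : ℝ → ℝ) : Finset π := (I.greedySeq μ).toFinset

/-- The state (unchosen projects, remaining budget) of `Greedy_μ` after `k` stages. -/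
def greedyStateAux (I : PB π ν) (μ : ℝ → ℝ) : ℕ → Finset π × ℝ
  | 0 => (I.projs, I.budget)
  | (k+1) =>
    match I.greedyStep μ (greedyStateAux I μ k).1 (greedyStateAux I μ k).2 with
    | none => greedyStateAux I μ k
    | some p => ((greedyStateAux I μ k).1.erase p, (greedyStateAux I μ k).2 - I.cost p)

/-- The project chosen by `Greedy_μ` at stage `k+1` (i.e. after `k` stages), if any. -/
def greedyChoice (I : PB π ν) (μ : ℝ → ℝ) (k : ℕ) : Option π :=
  I.greedyStep μ (I.greedyStateAux μ k).1 (I.greedyStateAux μ k).2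

end Greedy

section MES

variable [LinearOrder π]

/-- The set of values `ρ ≥ 0` at which project `p` can be bought given voter budgets `bud`. -/
def rhoSet (I : PB π ν) (μ : ℝ → ℝ) (bud : ν → ℝ) (p : π) : Set ℝ :=
  {ρ : ℝ | 0 ≤ ρ ∧ ∑ i ∈ I.supp p, min (bud i) (ρ * μ (I.cost p)) = I.cost p}

/-- `ρ(p)`: the least `ρ ≥ 0` at which `p` can be bought (junk value if none exists). -/
def rho (I : PB π ν) (μ : ℝ → ℝ) (bud : ν → ℝ) (p : π) : ℝ := sInf (I.rhoSet μ bud p)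

/-- One choice of MES: among the unchosen projects with `ρ(p) < ∞`, one minimizing `ρ(p)`
(ties broken by the linear order); `none` if no project can be bought. -/
def mesStep (I : PB π ν) (μ : ℝ → ℝ) (rem : Finset π) (bud : ν → ℝ) : Option π :=
  if h : (rem.filter (fun p => (I.rhoSet μ bud p).Nonempty)).Nonempty then
    some (pickMin (I.rho μ bud) (rem.filter (fun p => (I.rhoSet μ bud p).Nonempty)) h)
  else none

/-- Voter budgets after the supporters of `p` pay for it. -/
def mesPay (I : PB π ν) (μ : ℝ → ℝ) (bud : ν → ℝ) (p : π) : ν → ℝ :=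
  fun i => if i ∈ I.supp p then bud i - min (bud i) (I.rho μ bud p * μ (I.cost p)) else bud i

/-- The state (unchosen projects, voter budgets) of `MES_μ` after `k` stages. -/
def mesStateAux (I : PB π ν) (μ : ℝ → ℝ) : ℕ → Finset π × (ν → ℝ)
  | 0 => (I.projs, fun _ => I.budget / (I.voters.card : ℝ))
  | (k+1) =>
    match I.mesStep μ (mesStateAux I μ k).1 (mesStateAux I μ k).2 with
    | none => mesStateAux I μ k
    | some p => ((mesStateAux I μ k).1.erase p, I.mesPay μ (mesStateAux I μ k).2 p)

/-- The project chosen by `MES_μ` at stage `k+1` (i.e. after `k` stages), if any. -/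
def mesChoice (I : PB π ν) (μ : ℝ → ℝ) (k : ℕ) : Option π :=
  I.mesStep μ (I.mesStateAux μ k).1 (I.mesStateAux μ k).2

/-- The final state of `MES_μ`. -/
def mesFinal (I : PB π ν) (μ : ℝ → ℝ) : Finset π × (ν → ℝ) :=
  I.mesStateAux μ I.projs.card

/-- The outcome of `MES_μ`. -/
def mesOutcome (I : PB π ν) (μ : ℝ → ℝ) : Finset π := I.projs \ (I.mesFinal μ).1

/-- The outcome of `MES_μ` completed by `Greedy_μ`: run MES, then greedy on the unchosen
projects with the remaining total budget. -/
def completedMES (I : PB π ν) (μ : ℝ → ℝ) : Finset π :=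
  I.mesOutcome μ ∪
    I.greedyFrom μ (I.mesFinal μ).1 (I.budget - I.costOf (I.mesOutcome μ))

/-- Voter `i` is budget-limited for project `p` after `k` stages of `MES_μ`:
`p` is unchosen and approved by `i`, affordable from the total remaining budget,
but an equal split of its cost exceeds `i`'s personal budget. -/
def budgetLimitedAt (I : PB π ν) (μ : ℝ → ℝ) (k : ℕ) (i : ν) (p : π) : Prop :=
  i ∈ I.voters ∧ p ∈ (I.mesStateAux μ k).1 ∧ p ∈ I.approves i ∧
    I.cost p ≤ ∑ j ∈ I.voters, (I.mesStateAux μ k).2 j ∧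
    (I.mesStateAux μ k).2 i < I.cost p / ((I.supp p).card : ℝ)

end MES

/-- Total cost of a list of projects. -/
def listCost (I : PB π ν) (L : List π) : ℝ := (L.map I.cost).sum

/-- Total utilitarian welfare of a list of projects. -/
def listUW (I : PB π ν) (μ : ℝ → ℝ) (L : List π) : ℝ :=
  (L.map (fun p => ((I.supp p).card : ℝ) * μ (I.cost p))).sum

end PB

namespace PB

lemma supp_sub {π ν : Type} (I : PB π ν) (p : π) : I.supp p ⊆ I.voters :=
  Finset.filter_subset _ _

section Helpers

variable {π ν : Type} [LinearOrder π]

lemma pickMax_mem (f : π → ℝ) (S : Finset π) (h : S.Nonempty) : pickMax f S h ∈ S := by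
  unfold pickMax
  exact (Finset.mem_filter.mp (Finset.min'_mem _ _)).1

lemma pickMax_le (f : π → ℝ) (S : Finset π) (h : S.Nonempty) :
    ∀ q ∈ S, f q ≤ f (pickMax f S h) := by
  unfold pickMax
  exact (Finset.mem_filter.mp (Finset.min'_mem (S.filter (fun p => ∀ q ∈ S, f q ≤ f p)) _)).2

lemma pickMin_mem (f : π → ℝ) (S : Finset π) (h : S.Nonempty) : pickMin f S h ∈ S := by
  unfold pickMin
  exact (Finset.mem_filter.mp (Finset.min'_mem _ _)).1

lemma pickMin_le (f : π → ℝ) (S : Finset π) (h : S.Nonempty) :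
    ∀ q ∈ S, f (pickMin f S h) ≤ f q := by
  unfold pickMin
  exact (Finset.mem_filter.mp (Finset.min'_mem (S.filter (fun p => ∀ q ∈ S, f p ≤ f q)) _)).2

lemma greedyStep_some (I : PB π ν) (μ : ℝ → ℝ) (rem : Finset π) (budg : ℝ) (q : π)
    (h : I.greedyStep μ rem budg = some q) :
    q ∈ rem ∧ ∀ p ∈ rem, I.cost p ≤ budg → I.projVal μ p ≤ I.projVal μ q := by
  unfold greedyStep at h
  split_ifs at h with hn
  have h' := Option.some.inj h
  subst h'
  refine ⟨(Finset.mem_filter.mp (pickMax_mem _ _ hn)).1, fun p hp hc => ?_⟩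
  exact pickMax_le _ _ hn p (Finset.mem_filter.mpr ⟨hp, hc⟩)

lemma greedyStep_none (I : PB π ν) (μ : ℝ → ℝ) (rem : Finset π) (budg : ℝ)
    (h : I.greedyStep μ rem budg = none) : ∀ p ∈ rem, budg < I.cost p := by
  unfold greedyStep at h
  split_ifs at h with hn
  intro p hp
  by_contra hc
  exact hn ⟨p, Finset.mem_filter.mpr ⟨hp, not_lt.mp hc⟩⟩

lemma greedyAux_subset (I : PB π ν) (μ : ℝ → ℝ) (k : ℕ) : ∀ (rem : Finset π) (budg : ℝ),
    ∀ q ∈ greedyAux I μ k rem budg, q ∈ rem := by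
  induction k with
  | zero => intro rem budg q hq; simp [greedyAux] at hq
  | succ k ih =>
    intro rem budg q hq
    rw [greedyAux] at hq
    cases hs : I.greedyStep μ rem budg with
    | none => simp [hs] at hq
    | some r =>
      simp only [hs, List.mem_cons] at hq
      rcases hq with rfl | hq
      · exact (greedyStep_some I μ rem budg _ hs).1
      · exact Finset.mem_of_mem_erase (ih _ _ _ hq)

lemma greedyAux_good (I : PB π ν) (μ : ℝ → ℝ) (p : π) (k : ℕ) :
    ∀ (rem : Finset π) (budg : ℝ), rem.card ≤ k → p ∈ rem → p ∉ greedyAux I μ k rem budg →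
    ∃ G : Finset π, (∀ q ∈ G, q ∈ greedyAux I μ k rem budg) ∧ G ⊆ rem ∧
      (∀ q ∈ G, I.projVal μ p ≤ I.projVal μ q) ∧ budg - I.cost p ≤ I.costOf G := by
  induction k with
  | zero =>
    intro rem budg hc hp
    have := Finset.card_pos.mpr ⟨p, hp⟩
    omega
  | succ k ih =>
    intro rem budg hc hp hn
    by_cases hb : I.cost p ≤ budg
    · rw [greedyAux] at hn ⊢
      cases hs : I.greedyStep μ rem budg with
      | none => exact absurd (greedyStep_none I μ rem budg hs p hp) (not_lt.mpr hb)
      | some r =>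
        simp only [hs, List.mem_cons, not_or] at hn ⊢
        obtain ⟨hr, hv⟩ := greedyStep_some I μ rem budg _ hs
        obtain ⟨G, h1, h2, h3, h4⟩ := ih (rem.erase r) (budg - I.cost r)
          (by rw [Finset.card_erase_of_mem hr]; omega)
          (Finset.mem_erase.mpr ⟨hn.1, hp⟩) hn.2
        have hrG : r ∉ G := fun h => Finset.notMem_erase r rem (h2 h)
        refine ⟨insert r G, ?_, ?_, ?_, ?_⟩
        · intro q hq
          rcases Finset.mem_insert.mp hq with h | h
          · exact Or.inl h
          · exact Or.inr (h1 q h)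
        · intro q hq
          rcases Finset.mem_insert.mp hq with h | h
          · rw [h]; exact hr
          · exact Finset.mem_of_mem_erase (h2 h)
        · intro q hq
          rcases Finset.mem_insert.mp hq with h | h
          · rw [h]; exact hv p hp hb
          · exact h3 q h
        · unfold costOf at h4 ⊢
          rw [Finset.sum_insert hrG]
          linarith
    · refine ⟨∅, by simp, by simp, by simp, ?_⟩
      simp only [costOf, Finset.sum_empty]
      linarith

lemma mesStep_some (I : PB π ν) (μ : ℝ → ℝ) (rem : Finset π) (bud : ν → ℝ) (q : π)
    (h : I.mesStep μ rem bud = some q) :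
    q ∈ rem ∧ (I.rhoSet μ bud q).Nonempty ∧
      ∀ p ∈ rem, (I.rhoSet μ bud p).Nonempty → I.rho μ bud q ≤ I.rho μ bud p := by
  unfold mesStep at h
  split_ifs at h with hn
  have h' := Option.some.inj h
  subst h'
  have h1 := Finset.mem_filter.mp (pickMin_mem (I.rho μ bud) _ hn)
  refine ⟨h1.1, h1.2, fun p hp hc => ?_⟩
  exact pickMin_le _ _ hn p (Finset.mem_filter.mpr ⟨hp, hc⟩)

lemma mesStep_none (I : PB π ν) (μ : ℝ → ℝ) (rem : Finset π) (bud : ν → ℝ)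
    (h : I.mesStep μ rem bud = none) : ∀ p ∈ rem, ¬ (I.rhoSet μ bud p).Nonempty := by
  unfold mesStep at h
  split_ifs at h with hn
  intro p hp hc
  exact hn ⟨p, Finset.mem_filter.mpr ⟨hp, hc⟩⟩

lemma rho_mem (I : PB π ν) (μ : ℝ → ℝ) (bud : ν → ℝ) (q : π)
    (h : (I.rhoSet μ bud q).Nonempty) : I.rho μ bud q ∈ I.rhoSet μ bud q := by
  have hcl : IsClosed (I.rhoSet μ bud q) := by
    unfold rhoSet
    refine IsClosed.inter (isClosed_le continuous_const continuous_id) ?_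
    refine isClosed_eq ?_ continuous_const
    fun_prop
  exact hcl.csInf_mem h ⟨0, fun x hx => hx.1⟩

lemma rho_le (I : PB π ν) (μ : ℝ → ℝ) (bud : ν → ℝ) (q : π) (r : ℝ)
    (h : r ∈ I.rhoSet μ bud q) : I.rho μ bud q ≤ r :=
  csInf_le ⟨0, fun x hx => hx.1⟩ h

lemma mesState_none (I : PB π ν) (μ : ℝ → ℝ) (k : ℕ)
    (h : I.mesStep μ (I.mesStateAux μ k).1 (I.mesStateAux μ k).2 = none) :
    I.mesStateAux μ (k+1) = I.mesStateAux μ k := by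
  rw [mesStateAux]
  simp only [h]

lemma mesState_some (I : PB π ν) (μ : ℝ → ℝ) (k : ℕ) (q : π)
    (h : I.mesStep μ (I.mesStateAux μ k).1 (I.mesStateAux μ k).2 = some q) :
    I.mesStateAux μ (k+1) =
      ((I.mesStateAux μ k).1.erase q, I.mesPay μ (I.mesStateAux μ k).2 q) := by
  rw [mesStateAux]
  simp only [h]

lemma mesRem_succ (I : PB π ν) (μ : ℝ → ℝ) (k : ℕ) :
    (I.mesStateAux μ (k+1)).1 ⊆ (I.mesStateAux μ k).1 := by
  cases hs : I.mesStep μ (I.mesStateAux μ k).1 (I.mesStateAux μ k).2 with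
  | none => rw [mesState_none I μ k hs]
  | some q => rw [mesState_some I μ k q hs]; exact Finset.erase_subset _ _

lemma mesRem_anti (I : PB π ν) (μ : ℝ → ℝ) : Antitone (fun k => (I.mesStateAux μ k).1) :=
  antitone_nat_of_succ_le (mesRem_succ I μ)

lemma mesRem_sub (I : PB π ν) (μ : ℝ → ℝ) (k : ℕ) : (I.mesStateAux μ k).1 ⊆ I.projs :=
  mesRem_anti I μ (Nat.zero_le k)

lemma mes_fuel (I : PB π ν) (μ : ℝ → ℝ) (k : ℕ) :
    I.mesStep μ (I.mesStateAux μ k).1 (I.mesStateAux μ k).2 = none ∨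
      (I.mesStateAux μ k).1.card + k ≤ I.projs.card := by
  induction k with
  | zero => right; simp [mesStateAux]
  | succ k ih =>
    cases hs : I.mesStep μ (I.mesStateAux μ k).1 (I.mesStateAux μ k).2 with
    | none => left; rw [mesState_none I μ k hs]; exact hs
    | some q =>
      right
      rw [mesState_some I μ k q hs]
      have hq := (mesStep_some I μ _ _ q hs).1
      have := Finset.card_pos.mpr ⟨q, hq⟩
      rcases ih with h | h
      · rw [hs] at h; simp at h
      · simp only [Finset.card_erase_of_mem hq]; omega

lemma mes_final_none (I : PB π ν) (μ : ℝ → ℝ) (p : π) (hp : p ∈ (I.mesFinal μ).1) :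
    ¬ (I.rhoSet μ (I.mesFinal μ).2 p).Nonempty := by
  rcases mes_fuel I μ I.projs.card with h | h
  · exact mesStep_none I μ _ _ h p hp
  · have : 0 < (I.mesStateAux μ I.projs.card).1.card := Finset.card_pos.mpr ⟨p, hp⟩
    omega

lemma mesPay_bounds (I : PB π ν) (μ : ℝ → ℝ) (bud : ν → ℝ) (q : π) (B : ℝ)
    (hb : ∀ i, 0 ≤ bud i ∧ bud i ≤ B) (hm : 0 ≤ μ (I.cost q))
    (hr : 0 ≤ I.rho μ bud q) :
    ∀ i, 0 ≤ I.mesPay μ bud q i ∧ I.mesPay μ bud q i ≤ B := by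
  intro i
  unfold mesPay
  have := hb i
  split_ifs with h
  · have h1 : min (bud i) (I.rho μ bud q * μ (I.cost q)) ≤ bud i := min_le_left _ _
    have h2 : 0 ≤ min (bud i) (I.rho μ bud q * μ (I.cost q)) :=
      le_min this.1 (mul_nonneg hr hm)
    constructor <;> linarith
  · exact this

lemma mes_bud (I : PB π ν) (μ : ℝ → ℝ) (hs : IsSat μ) (k : ℕ) :
    ∀ i, 0 ≤ (I.mesStateAux μ k).2 i ∧
      (I.mesStateAux μ k).2 i ≤ I.budget / (I.voters.card : ℝ) := by
  induction k with
  | zero =>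
    intro i
    simp only [mesStateAux]
    exact ⟨div_nonneg I.budget_pos.le (Nat.cast_nonneg _), le_refl _⟩
  | succ k ih =>
    cases h : I.mesStep μ (I.mesStateAux μ k).1 (I.mesStateAux μ k).2 with
    | none => rw [mesState_none I μ k h]; exact ih
    | some q =>
      rw [mesState_some I μ k q h]
      obtain ⟨h1, h2, -⟩ := mesStep_some I μ _ _ q h
      exact mesPay_bounds I μ _ q _ ih
        (hs _ (I.cost_pos q (mesRem_sub I μ k h1))).le (rho_mem I μ _ q h2).1

/-- Every project bought by MES has a value at least `n μ(c_min) / b`. -/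
lemma mes_val (I : PB π ν) (μ : ℝ → ℝ) (hs : IsSat μ) (m : ℝ) (hm0 : 0 ≤ m)
    (hm : ∀ q ∈ I.projs, m ≤ μ (I.cost q)) (k : ℕ) :
    ∀ q ∈ I.projs \ (I.mesStateAux μ k).1,
      (I.voters.card : ℝ) * m / I.budget ≤ I.projVal μ q := by
  induction k with
  | zero => intro q hq; simp [mesStateAux] at hq
  | succ k ih =>
    cases h : I.mesStep μ (I.mesStateAux μ k).1 (I.mesStateAux μ k).2 with
    | none => rw [mesState_none I μ k h]; exact ih
    | some r =>
      rw [mesState_some I μ k r h]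
      intro q hq
      obtain ⟨h1, h2, -⟩ := mesStep_some I μ _ _ r h
      by_cases hqr : q = r
      · subst hqr
        have hqp := mesRem_sub I μ k h1
        have hc := I.cost_pos q hqp
        have hb := I.budget_pos
        have hsum := (rho_mem I μ _ q h2).2
        have hle : I.cost q ≤ ((I.supp q).card : ℝ) * (I.budget / (I.voters.card : ℝ)) := by
          rw [← hsum, ← nsmul_eq_mul]
          apply Finset.sum_le_card_nsmul
          intro i _
          exact (min_le_left _ _).trans (mes_bud I μ hs k i).2
        have hn : 0 < (I.voters.card : ℝ) := by
          rcases Nat.eq_zero_or_pos I.voters.card with h0 | h0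
          · rw [h0] at hle; simp at hle; linarith
          · exact_mod_cast h0
        have hle2 : I.cost q * (I.voters.card : ℝ) ≤ ((I.supp q).card : ℝ) * I.budget := by
          rw [← mul_div_assoc, le_div_iff₀ hn] at hle; exact hle
        unfold projVal
        rw [div_le_div_iff₀ hb hc]
        have := hm q hqp
        have h3 : I.cost q * (I.voters.card : ℝ) * m ≤ ((I.supp q).card : ℝ) * I.budget * μ (I.cost q) :=
          mul_le_mul hle2 this hm0 (by positivity)
        linarith
      · apply ih
        simp only [Finset.mem_sdiff, Finset.mem_erase, not_and] at hq ⊢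
        exact ⟨hq.1, fun h => hq.2 hqr h⟩

lemma inv_mem_rhoSet (I : PB π ν) (μ : ℝ → ℝ) (bud : ν → ℝ) (p : π)
    (hc : 0 < I.cost p) (hm : 0 < μ (I.cost p)) (hv : 0 < I.projVal μ p)
    (h : ∀ i ∈ I.supp p, I.cost p / ((I.supp p).card : ℝ) ≤ bud i) :
    1 / I.projVal μ p ∈ I.rhoSet μ bud p := by
  have hN : (0:ℝ) < ((I.supp p).card : ℝ) := by
    rcases Nat.eq_zero_or_pos (I.supp p).card with h0 | h0
    · unfold projVal at hv; rw [h0] at hv; simp at hv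
    · exact_mod_cast h0
  have he : 1 / I.projVal μ p * μ (I.cost p) = I.cost p / ((I.supp p).card : ℝ) := by
    unfold projVal; field_simp
  refine ⟨by positivity, ?_⟩
  rw [he, Finset.sum_congr rfl (fun i hi => min_eq_right (h i hi)), Finset.sum_const,
    nsmul_eq_mul]
  field_simp

lemma mes_prefix (I : PB π ν) (μ : ℝ → ℝ) (hs : IsSat μ) (p : π) (hpp : p ∈ I.projs)
    (hv : 0 < I.projVal μ p) (k : ℕ) (hp : p ∈ (I.mesStateAux μ k).1)
    (hl : ∀ j < k, ∀ i ∈ I.supp p,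
      I.cost p / ((I.supp p).card : ℝ) ≤ (I.mesStateAux μ j).2 i) :
    (∀ q ∈ I.projs \ (I.mesStateAux μ k).1, I.projVal μ p ≤ I.projVal μ q) ∧
    ∀ i, I.budget / (I.voters.card : ℝ) - (I.mesStateAux μ k).2 i ≤
      (∑ q ∈ I.projs \ (I.mesStateAux μ k).1, μ (I.cost q)) / I.projVal μ p := by
  induction k with
  | zero => simp [mesStateAux]
  | succ k ih =>
    obtain ⟨ih1, ih2⟩ := ih (mesRem_succ I μ k hp) (fun j hj => hl j (by omega))
    have hmp := mesRem_succ I μ k hp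
    cases h : I.mesStep μ (I.mesStateAux μ k).1 (I.mesStateAux μ k).2 with
    | none => rw [mesState_none I μ k h]; exact ⟨ih1, ih2⟩
    | some r =>
      rw [mesState_some I μ k r h]
      obtain ⟨h1, h2, h3⟩ := mesStep_some I μ _ _ r h
      have hrp := mesRem_sub I μ k h1
      have hcr := I.cost_pos r hrp
      have hmr := hs _ hcr
      have hin := inv_mem_rhoSet I μ (I.mesStateAux μ k).2 p (I.cost_pos p hpp)
        (hs _ (I.cost_pos p hpp)) hv (hl k (by omega))
      have hrho : I.rho μ (I.mesStateAux μ k).2 r ≤ 1 / I.projVal μ p :=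
        (h3 p hmp ⟨_, hin⟩).trans (rho_le I μ _ p _ hin)
      have hmem := rho_mem I μ _ r h2
      have hset : I.projs \ (I.mesStateAux μ k).1.erase r =
          insert r (I.projs \ (I.mesStateAux μ k).1) := by
        ext q
        simp only [Finset.mem_sdiff, Finset.mem_erase, not_and, Finset.mem_insert]
        constructor
        · rintro ⟨ha, hb⟩
          by_cases hqr : q = r
          · exact Or.inl hqr
          · exact Or.inr ⟨ha, hb hqr⟩
        · rintro (rfl | ⟨ha, hb⟩)
          · exact ⟨hrp, fun h => absurd rfl h⟩
          · exact ⟨ha, fun _ => hb⟩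
      have hnot : r ∉ I.projs \ (I.mesStateAux μ k).1 := by
        simp only [Finset.mem_sdiff, not_and, not_not]; exact fun _ => h1
      simp only [hset]
      constructor
      · intro q hq
        rcases Finset.mem_insert.mp hq with hq | hq
        · subst hq
          have hsum := hmem.2
          have hle : I.cost q ≤ ((I.supp q).card : ℝ) * (1 / I.projVal μ p * μ (I.cost q)) := by
            conv_lhs => rw [← hsum]
            rw [← nsmul_eq_mul]
            apply Finset.sum_le_card_nsmul
            intro i _
            exact (min_le_right _ _).trans (mul_le_mul_of_nonneg_right hrho hmr.le)
          have e : I.projVal μ q = ((I.supp q).card : ℝ) * μ (I.cost q) / I.cost q := rfl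
          rw [e, le_div_iff₀ hcr]
          have hle' := mul_le_mul_of_nonneg_left hle hv.le
          have e2 : I.projVal μ p * (((I.supp q).card : ℝ) * (1 / I.projVal μ p * μ (I.cost q)))
            = ((I.supp q).card : ℝ) * μ (I.cost q) := by field_simp
          linarith
        · exact ih1 q hq
      · intro i
        rw [Finset.sum_insert hnot, add_div]
        have hi := ih2 i
        have hpos : 0 < μ (I.cost r) / I.projVal μ p := div_pos hmr hv
        unfold mesPay
        split_ifs with hir
        · have h5 : min ((I.mesStateAux μ k).2 i)
              (I.rho μ (I.mesStateAux μ k).2 r * μ (I.cost r)) ≤ μ (I.cost r) / I.projVal μ p := by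
            refine (min_le_right _ _).trans ((mul_le_mul_of_nonneg_right hrho hmr.le).trans ?_)
            apply le_of_eq; ring
          linarith
        · linarith

lemma final_algebra (b v w C cm cM : ℝ) (hb : 0 < b) (hw : 0 < w) (hvw : w ≤ v)
    (hcm : 0 < cm) (hC : cm * v / w - cM ≤ C) :
    (2 * Real.sqrt (cm / b) - (cm + cM) / b) * (v * b) ≤ v * C + (b - cM - C) * w := by
  have h1 : (cm * v / w - cM) * (v - w) ≤ C * (v - w) :=
    mul_le_mul_of_nonneg_right hC (by linarith)
  have h2 : (cm * v / w - cM) * (v - w) = cm * v^2 / w - cm * v - cM * v + cM * w := by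
    field_simp; ring
  set s := Real.sqrt (cm / b) with hs
  have hs2 : s ^ 2 = cm / b := Real.sq_sqrt (by positivity)
  have hcm' : cm = s^2 * b := by rw [hs2]; field_simp
  have h3 : 2 * s * v * b ≤ cm * v^2 / w + b * w := by
    have : cm * v^2 / w + b * w - 2 * s * v * b = b / w * (s * v - w)^2 := by
      rw [hcm']; field_simp; ring
    have h4 : 0 ≤ b / w * (s * v - w)^2 := by positivity
    linarith
  have h5 : (2 * s - (cm + cM) / b) * (v * b) = 2 * s * v * b - (cm + cM) * v := by
    field_simp
  rw [h5]
  nlinarith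

lemma guarantee_le (y z : ℝ) (hy : 0 ≤ y) : 2 * Real.sqrt y - (y + z) ≤ 1 - z := by
  have := Real.sq_sqrt hy
  nlinarith [sq_nonneg (Real.sqrt y - 1)]

/-- The key bound: the truncated welfare of a part of the outcome. -/
lemma key_bound (I : PB π ν) (μ : ℝ → ℝ) (hD : IsDNS μ) (p : π) (hp : p ∈ I.projs)
    (hn : p ∉ I.completedMES μ) :
    ∃ G ⊆ I.completedMES μ,
      (2 * Real.sqrt (I.cmin / I.budget) - (I.cmin + I.cmax) / I.budget) *
        (I.projVal μ p * I.budget) ≤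
      ∑ q ∈ G, min (I.projVal μ q) (I.projVal μ p) * I.cost q := by
  obtain ⟨hs, hmono, hdec⟩ := hD
  have hb := I.budget_pos
  have hcminle : ∀ q ∈ I.projs, I.cmin ≤ I.cost q := fun q hq => Finset.inf'_le _ hq
  have hcmaxle : ∀ q ∈ I.projs, I.cost q ≤ I.cmax := fun q hq => Finset.le_sup' _ hq
  have hcmin : 0 < I.cmin := by
    unfold cmin
    rw [Finset.lt_inf'_iff]
    exact I.cost_pos
  set v := I.projVal μ p with hvdef
  set m := μ I.cmin with hmdef
  have hm : 0 < m := hs _ hcmin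
  set w := (I.voters.card : ℝ) * m / I.budget with hwdef
  have hw0 : 0 ≤ w := by positivity
  have hcp := I.cost_pos p hp
  have hv0 : 0 ≤ v := by
    have := hs _ hcp
    rw [hvdef]; unfold projVal; positivity
  have hpm : p ∈ (I.mesFinal μ).1 := by
    by_contra h
    exact hn (Finset.mem_union_left _ (Finset.mem_sdiff.mpr ⟨hp, h⟩))
  have hpg : p ∉ greedyAux I μ (I.mesFinal μ).1.card (I.mesFinal μ).1
      (I.budget - I.costOf (I.mesOutcome μ)) := by
    intro h
    exact hn (Finset.mem_union_right _ (List.mem_toFinset.mpr h))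
  obtain ⟨G, g1, g2, g3, g4⟩ := greedyAux_good I μ p _ _ _ le_rfl hpm hpg
  have hdisj : Disjoint (I.mesOutcome μ) G := by
    rw [Finset.disjoint_left]
    intro q hq hqG
    exact (Finset.mem_sdiff.mp hq).2 (g2 hqG)
  have hmval : ∀ q ∈ I.mesOutcome μ, w ≤ I.projVal μ q :=
    mes_val I μ hs m hm.le (fun q hq => hmono _ _ hcmin (hcminle q hq)) I.projs.card
  have hsubp : I.mesOutcome μ ∪ G ⊆ I.projs := by
    apply Finset.union_subset
    · exact Finset.sdiff_subset
    · exact g2.trans (mesRem_sub I μ _)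
  have hcostG : I.budget - I.cmax ≤ ∑ q ∈ I.mesOutcome μ ∪ G, I.cost q := by
    rw [Finset.sum_union hdisj]
    unfold costOf at g4
    have := hcmaxle p hp
    linarith
  refine ⟨I.mesOutcome μ ∪ G, ?_, ?_⟩
  · apply Finset.union_subset_union le_rfl
    intro q hq
    exact List.mem_toFinset.mpr (g1 q hq)
  have hmin : ∀ q ∈ I.mesOutcome μ ∪ G, min w v ≤ min (I.projVal μ q) v := by
    intro q hq
    rcases Finset.mem_union.mp hq with h | h
    · exact min_le_min_right _ (hmval q h)
    · exact le_min ((min_le_right _ _).trans (g3 q h)) (min_le_right _ _)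
  rcases le_or_gt v w with hvw | hvw
  · -- all relevant projects have value at least `v`
    have h1 : ∑ q ∈ I.mesOutcome μ ∪ G, v * I.cost q ≤
        ∑ q ∈ I.mesOutcome μ ∪ G, min (I.projVal μ q) v * I.cost q := by
      apply Finset.sum_le_sum
      intro q hq
      have := hmin q hq
      rw [min_eq_right hvw] at this
      exact mul_le_mul_of_nonneg_right this (I.cost_pos q (hsubp hq)).le
    refine le_trans ?_ h1
    rw [← Finset.mul_sum]
    have h2 := guarantee_le (I.cmin / I.budget) (I.cmax / I.budget) (by positivity)
    rw [← add_div] at h2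
    calc _ ≤ (1 - I.cmax / I.budget) * (v * I.budget) :=
          mul_le_mul_of_nonneg_right h2 (by positivity)
      _ = v * (I.budget - I.cmax) := by field_simp
      _ ≤ _ := mul_le_mul_of_nonneg_left hcostG hv0
  · have hv : 0 < v := lt_of_le_of_lt hw0 hvw
    have hN : (0:ℝ) < ((I.supp p).card : ℝ) := by
      rcases Nat.eq_zero_or_pos (I.supp p).card with h0 | h0
      · rw [hvdef] at hv; unfold projVal at hv; rw [h0] at hv; simp at hv
      · exact_mod_cast h0
    have hVN : (0:ℝ) < (I.voters.card : ℝ) :=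
      lt_of_lt_of_le hN (by exact_mod_cast Finset.card_le_card (supp_sub I p))
    have hw : 0 < w := by positivity
    have hex : ∃ k, k ≤ I.projs.card ∧ ∃ i ∈ I.supp p,
        (I.mesStateAux μ k).2 i < I.cost p / ((I.supp p).card : ℝ) := by
      refine ⟨I.projs.card, le_rfl, ?_⟩
      by_contra hcon
      push Not at hcon
      exact mes_final_none I μ p hpm ⟨_, inv_mem_rhoSet I μ _ p hcp (hs _ hcp) hv hcon⟩
    obtain ⟨hk, i, hi, hbi⟩ := Nat.find_spec hex
    have hmn := fun j (hj : j < Nat.find hex) => Nat.find_min hex hj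
    generalize Nat.find hex = k at hk hbi hmn
    have hanti : (I.mesFinal μ).1 ⊆ (I.mesStateAux μ k).1 := mesRem_anti I μ hk
    obtain ⟨f1, f2⟩ := mes_prefix I μ hs p hp hv k (hanti hpm) (by
      intro j hj i hi
      by_contra hc
      exact hmn j hj ⟨by omega, i, hi, not_le.mp hc⟩)
    set H := I.projs \ (I.mesStateAux μ k).1 with hH
    have hHsub : H ⊆ I.mesOutcome μ ∪ G :=
      (Finset.sdiff_subset_sdiff le_rfl hanti).trans Finset.subset_union_left
    have hf := f2 i
    have hmu : ∀ q ∈ I.projs, μ (I.cost q) ≤ m / I.cmin * I.cost q := by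
      intro q hq
      have := hdec _ _ hcmin (hcminle q hq)
      rwa [div_le_iff₀ (I.cost_pos q hq)] at this
    have hsumH : ∑ q ∈ H, μ (I.cost q) ≤ m / I.cmin * ∑ q ∈ H, I.cost q := by
      rw [Finset.mul_sum]
      exact Finset.sum_le_sum fun q hq => hmu q (Finset.sdiff_subset hq)
    have hCb : I.cmin * v / w - I.cmax ≤ ∑ q ∈ H, I.cost q := by
      have e1 : I.cost p / ((I.supp p).card : ℝ) = μ (I.cost p) / v := by
        have := hs _ hcp
        rw [hvdef]; unfold projVal; field_simp
      have h6 : I.budget / (I.voters.card : ℝ) ≤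
          (∑ q ∈ H, μ (I.cost q)) / v + μ (I.cost p) / v := by
        rw [← e1]; linarith
      rw [← add_div, le_div_iff₀ hv] at h6
      have h7 := hmu p hp
      have h8 : I.budget / (I.voters.card : ℝ) * v ≤
          m / I.cmin * (∑ q ∈ H, I.cost q + I.cost p) := by
        rw [mul_add]; linarith
      have h9 := mul_le_mul_of_nonneg_left h8 (show 0 ≤ I.cmin / m by positivity)
      have e2 : I.cmin / m * (m / I.cmin * (∑ q ∈ H, I.cost q + I.cost p)) =
          ∑ q ∈ H, I.cost q + I.cost p := by field_simp
      have e3 : I.cmin / m * (I.budget / (I.voters.card : ℝ) * v) = I.cmin * v / w := by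
        rw [hwdef]; field_simp
      rw [e2, e3] at h9
      have := hcmaxle p hp
      linarith
    refine (final_algebra I.budget v w _ I.cmin I.cmax hb hw hvw.le hcmin hCb).trans ?_
    rw [← Finset.sum_sdiff hHsub] at hcostG ⊢
    have s1 : v * ∑ q ∈ H, I.cost q ≤ ∑ q ∈ H, min (I.projVal μ q) v * I.cost q := by
      rw [Finset.mul_sum]
      apply Finset.sum_le_sum
      intro q hq
      rw [min_eq_right (f1 q hq)]
    have s2 : w * ∑ q ∈ (I.mesOutcome μ ∪ G) \ H, I.cost q ≤
        ∑ q ∈ (I.mesOutcome μ ∪ G) \ H, min (I.projVal μ q) v * I.cost q := by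
      rw [Finset.mul_sum]
      apply Finset.sum_le_sum
      intro q hq
      have hq' := Finset.sdiff_subset hq
      have := hmin q hq'
      rw [min_eq_left hvw.le] at this
      exact mul_le_mul_of_nonneg_right this (I.cost_pos q (hsubp hq')).le
    have s3 : (I.budget - I.cmax - ∑ q ∈ H, I.cost q) * w ≤
        w * ∑ q ∈ (I.mesOutcome μ ∪ G) \ H, I.cost q := by
      rw [mul_comm]
      exact mul_le_mul_of_nonneg_left (by linarith) hw0
    linarith

lemma completed_sub (I : PB π ν) (μ : ℝ → ℝ) : I.completedMES μ ⊆ I.projs := by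
  apply Finset.union_subset
  · exact Finset.sdiff_subset
  · intro q hq
    exact mesRem_sub I μ _ (greedyAux_subset I μ _ _ _ q (List.mem_toFinset.mp hq))

end Helpers

end PB

/-- Utilitarian guarantee of MES completed by Greedy for DNS functions. -/
theorem mes_guarantee {π ν : Type} [LinearOrder π] (I : PB π ν)
    (μ : ℝ → ℝ) (hDNS : IsDNS μ) :
    ∀ Pstar : Finset π, I.feasibleSet Pstar →
      I.uw μ (I.completedMES μ) ≥
        (2 * Real.sqrt (I.cmin / I.budget) - (I.cmin + I.cmax) / I.budget) *
          I.uw μ Pstar := by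
  intro P hP
  obtain ⟨hPs, hPb⟩ := hP
  have hb := I.budget_pos
  have hs := hDNS.1
  have hterm : ∀ q ∈ I.projs, ((I.supp q).card : ℝ) * μ (I.cost q) =
      I.projVal μ q * I.cost q := by
    intro q hq
    have := I.cost_pos q hq
    unfold PB.projVal
    field_simp
  have htpos : ∀ q ∈ I.projs, 0 ≤ I.projVal μ q := by
    intro q hq
    have h1 := I.cost_pos q hq
    have h2 := hs _ h1
    unfold PB.projVal
    positivity
  have hMs := PB.completed_sub I μ
  have huw : ∀ S ⊆ I.projs, I.uw μ S = ∑ q ∈ S, I.projVal μ q * I.cost q := fun S hS =>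
    Finset.sum_congr rfl fun q hq => hterm q (hS hq)
  have hnn : ∀ q ∈ I.projs, 0 ≤ I.projVal μ q * I.cost q := fun q hq =>
    mul_nonneg (htpos q hq) (I.cost_pos q hq).le
  rw [ge_iff_le, huw _ hMs, huw _ hPs]
  have hM0 : 0 ≤ ∑ q ∈ I.completedMES μ, I.projVal μ q * I.cost q :=
    Finset.sum_nonneg fun q hq => hnn q (hMs hq)
  have hP0 : 0 ≤ ∑ q ∈ P, I.projVal μ q * I.cost q :=
    Finset.sum_nonneg fun q hq => hnn q (hPs hq)
  obtain ⟨q0, hq0⟩ := I.projs_nonempty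
  have hcmin : 0 < I.cmin := by
    unfold PB.cmin
    rw [Finset.lt_inf'_iff]
    exact I.cost_pos
  have hcmax : 0 < I.cmax := lt_of_lt_of_le (I.cost_pos q0 hq0) (Finset.le_sup' _ hq0)
  have hg1 : 2 * Real.sqrt (I.cmin / I.budget) - (I.cmin + I.cmax) / I.budget ≤ 1 := by
    have h2 := PB.guarantee_le (I.cmin / I.budget) (I.cmax / I.budget) (by positivity)
    rw [← add_div] at h2
    have : 0 < I.cmax / I.budget := by positivity
    linarith
  by_cases hsub : P ⊆ I.completedMES μ
  · have h1 : ∑ q ∈ P, I.projVal μ q * I.cost q ≤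
        ∑ q ∈ I.completedMES μ, I.projVal μ q * I.cost q :=
      Finset.sum_le_sum_of_subset_of_nonneg hsub fun q hq _ => hnn q (hMs hq)
    exact (mul_le_of_le_one_left hP0 hg1).trans h1
  · have hne : (P \ I.completedMES μ).Nonempty := Finset.sdiff_nonempty.mpr hsub
    obtain ⟨p, hp, hpmax⟩ := Finset.exists_max_image _ (I.projVal μ) hne
    have hp' := Finset.mem_sdiff.mp hp
    obtain ⟨G, hG, hkey⟩ := PB.key_bound I μ hDNS p (hPs hp'.1) hp'.2
    have hv0 := htpos p (hPs hp'.1)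
    generalize 2 * Real.sqrt (I.cmin / I.budget) - (I.cmin + I.cmax) / I.budget = g at *
    generalize I.projVal μ p = v at *
    rcases le_or_gt g 0 with hg | hg
    · exact (mul_nonpos_of_nonpos_of_nonneg hg hP0).trans hM0
    have hEnn : ∀ q ∈ I.projs, 0 ≤ (I.projVal μ q - min (I.projVal μ q) v) * I.cost q :=
      fun q hq => mul_nonneg (sub_nonneg.mpr (min_le_left _ _)) (I.cost_pos q hq).le
    set E := ∑ q ∈ I.completedMES μ, (I.projVal μ q - min (I.projVal μ q) v) * I.cost q with hE
    have hE0 : 0 ≤ E := Finset.sum_nonneg fun q hq => hEnn q (hMs hq)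
    have h1 : ∑ q ∈ P, I.projVal μ q * I.cost q ≤ v * I.budget + E := by
      have e : ∑ q ∈ P, I.projVal μ q * I.cost q =
          ∑ q ∈ P, min (I.projVal μ q) v * I.cost q +
          ∑ q ∈ P, (I.projVal μ q - min (I.projVal μ q) v) * I.cost q := by
        rw [← Finset.sum_add_distrib]
        exact Finset.sum_congr rfl fun q _ => by ring
      rw [e]
      apply add_le_add
      · calc _ ≤ ∑ q ∈ P, v * I.cost q := Finset.sum_le_sum fun q hq =>
              mul_le_mul_of_nonneg_right (min_le_right _ _) (I.cost_pos q (hPs hq)).le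
          _ = v * I.costOf P := by rw [← Finset.mul_sum]; rfl
          _ ≤ _ := mul_le_mul_of_nonneg_left hPb hv0
      · calc _ = ∑ q ∈ P ∩ I.completedMES μ,
              (I.projVal μ q - min (I.projVal μ q) v) * I.cost q := by
              symm
              apply Finset.sum_subset Finset.inter_subset_left
              intro q hq hq2
              have hq3 : q ∉ I.completedMES μ := fun h => hq2 (Finset.mem_inter.mpr ⟨hq, h⟩)
              rw [min_eq_left (hpmax q (Finset.mem_sdiff.mpr ⟨hq, hq3⟩))]
              ring
          _ ≤ E := Finset.sum_le_sum_of_subset_of_nonneg Finset.inter_subset_right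
              fun q hq _ => hEnn q (hMs hq)
    have h2 : ∑ q ∈ I.completedMES μ, I.projVal μ q * I.cost q =
        ∑ q ∈ I.completedMES μ, min (I.projVal μ q) v * I.cost q + E := by
      rw [hE, ← Finset.sum_add_distrib]
      exact Finset.sum_congr rfl fun q _ => by ring
    have h3 : ∑ q ∈ G, min (I.projVal μ q) v * I.cost q ≤
        ∑ q ∈ I.completedMES μ, min (I.projVal μ q) v * I.cost q :=
      Finset.sum_le_sum_of_subset_of_nonneg hG fun q hq _ =>
        mul_nonneg (le_min (htpos q (hMs hq)) hv0) (I.cost_pos q (hMs hq)).le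
    have h4 := mul_le_mul_of_nonneg_left h1 hg.le
    have h5 := mul_le_of_le_one_left hE0 hg1
    rw [mul_add] at h4
    linarith
end
end

section
/- Let μ and μ' be DNS satisfaction functions and let I be a PB instance with budget b, minimum project cost c_min and maximum project cost c_max. Then the outcome P_G of Greedy_{μ'} satisfies uw_μ(P_G) ≥ ((b − c_max)/b)·(c_min/c_max)·uw_μ(P*) for every feasible outcome P* ⊆ P; i.e., Greedy_{μ'} has utilitarian guarantee ((b − c_max)/b)·(c_min/c_max) with respect to μ. -/
open Finset
open scoped Classical

noncomputable section

namespace PB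

lemma pickMax_spec {π : Type} [LinearOrder π] (f : π → ℝ) (S : Finset π) (h : S.Nonempty) :
    pickMax f S h ∈ S ∧ ∀ q ∈ S, f q ≤ f (pickMax f S h) := by
  have := Finset.min'_mem (S.filter (fun p => ∀ q ∈ S, f q ≤ f p)) (by
    obtain ⟨p, hp, hm⟩ := S.exists_max_image f h
    exact ⟨p, Finset.mem_filter.mpr ⟨hp, hm⟩⟩)
  exact Finset.mem_filter.mp this

lemma greedyAux_mem {π ν : Type} [LinearOrder π] (I : PB π ν) (μ : ℝ → ℝ) (k : ℕ) :
    ∀ (rem : Finset π) (budg : ℝ), ∀ p ∈ greedyAux I μ k rem budg, p ∈ rem := by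
  induction k with
  | zero => intro rem budg p hp; simp [greedyAux] at hp
  | succ k ih =>
    intro rem budg p hp
    unfold greedyAux greedyStep at hp
    split_ifs at hp with h
    · simp only [List.mem_cons] at hp
      rcases hp with rfl | hp
      · exact (Finset.mem_filter.mp (pickMax_spec _ _ h).1).1
      · exact (Finset.mem_erase.mp (ih _ _ _ hp)).2
    · simp at hp

lemma greedyAux_prefix {π ν : Type} [LinearOrder π] (I : PB π ν) (μ : ℝ → ℝ) (k : ℕ) :
    ∀ (rem : Finset π) (budg : ℝ), rem.card ≤ k → rem ⊆ I.projs →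
      ∀ Q : Finset π, Q.Nonempty → (∀ q ∈ Q, q ∈ rem ∧ q ∉ greedyAux I μ k rem budg) →
      ∃ G0 : Finset π, (∀ p ∈ G0, p ∈ greedyAux I μ k rem budg) ∧
        (∀ p ∈ G0, ∀ q ∈ Q, I.projVal μ q ≤ I.projVal μ p) ∧
        budg - I.cmax ≤ I.costOf G0 := by
  induction k with
  | zero =>
    intro rem budg hc hs Q hQ hq
    obtain ⟨q, hqQ⟩ := hQ
    have : rem = ∅ := Finset.card_eq_zero.mp (by omega)
    have h1 := (hq q hqQ).1
    simp [this] at h1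
  | succ k ih =>
    intro rem budg hc hs Q hQ hq
    by_cases hex : ∃ q ∈ Q, budg < I.cost q
    · obtain ⟨q, hqQ, hlt⟩ := hex
      refine ⟨∅, by simp, by simp, ?_⟩
      have : I.cost q ≤ I.cmax := Finset.le_sup' I.cost (hs (hq q hqQ).1)
      simp only [costOf, Finset.sum_empty]
      linarith
    · push Not at hex
      have haff : ∀ q ∈ Q, q ∈ rem.filter (fun p => I.cost p ≤ budg) := fun q hqQ =>
        Finset.mem_filter.mpr ⟨(hq q hqQ).1, hex q hqQ⟩
      have h : (rem.filter (fun p => I.cost p ≤ budg)).Nonempty := by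
        obtain ⟨q, hqQ⟩ := hQ
        exact ⟨q, haff q hqQ⟩
      obtain ⟨hp1, hp2⟩ := pickMax_spec (I.projVal μ) _ h
      have hstep : greedyAux I μ (k+1) rem budg =
          (pickMax (I.projVal μ) _ h) :: greedyAux I μ k (rem.erase (pickMax (I.projVal μ) _ h))
            (budg - I.cost (pickMax (I.projVal μ) _ h)) := by
        conv_lhs => unfold greedyAux greedyStep
        rw [dif_pos h]
      rw [hstep] at hq ⊢
      generalize pickMax (I.projVal μ) _ h = p at *
      have hpr := (Finset.mem_filter.mp hp1).1
      obtain ⟨G0, h1, h2, h3⟩ := ih (rem.erase p) (budg - I.cost p)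
        (by rw [Finset.card_erase_of_mem hpr]; omega)
        ((Finset.erase_subset _ _).trans hs) Q hQ (by
          intro q hqQ
          have := hq q hqQ
          simp only [List.mem_cons, not_or] at this
          exact ⟨Finset.mem_erase.mpr ⟨this.2.1, this.1⟩, this.2.2⟩)
      have hpG : p ∉ G0 := fun hh =>
        (Finset.mem_erase.mp (greedyAux_mem I μ k _ _ _ (h1 p hh))).1 rfl
      refine ⟨insert p G0, ?_, ?_, ?_⟩
      · intro x hx
        rcases Finset.mem_insert.mp hx with rfl | hx
        · simp
        · exact List.mem_cons_of_mem _ (h1 x hx)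
      · intro x hx q hqQ
        rcases Finset.mem_insert.mp hx with rfl | hx
        · exact hp2 q (haff q hqQ)
        · exact h2 x hx q hqQ
      · unfold costOf at h3 ⊢
        rw [Finset.sum_insert hpG]
        linarith

lemma dns_ratio (μ μ' : ℝ → ℝ) (hμ : IsDNS μ) (hμ' : IsDNS μ') (a b s t : ℝ)
    (ha : 0 < a) (has : a ≤ s) (hat : a ≤ t) (hsb : s ≤ b) (htb : t ≤ b) :
    a * (μ t * μ' s) ≤ b * (μ s * μ' t) := by
  obtain ⟨h1, h2, h3⟩ := hμ
  obtain ⟨h1', h2', h3'⟩ := hμ'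
  have hs : 0 < s := by linarith
  have ht : 0 < t := by linarith
  have ps := h1 s hs
  have pt := h1 t ht
  have ps' := h1' s hs
  have pt' := h1' t ht
  have key : a * (μ t * μ' s) ≤ b * (μ s * μ' t) := by
    rcases le_total s t with hst | hst
    · have e := h3 s t hs hst
      rw [div_le_div_iff₀ ht hs] at e
      have e' := h2' s t hs hst
      calc a * (μ t * μ' s) ≤ s * (μ t * μ' s) := by gcongr
        _ = (μ t * s) * μ' s := by ring
        _ ≤ (μ s * t) * μ' t := by gcongr
        _ = t * (μ s * μ' t) := by ring
        _ ≤ b * (μ s * μ' t) := by gcongr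
    · have e := h3' t s ht hst
      rw [div_le_div_iff₀ hs ht] at e
      have e' := h2 t s ht hst
      calc a * (μ t * μ' s) ≤ t * (μ t * μ' s) := by gcongr
        _ = μ t * (μ' s * t) := by ring
        _ ≤ μ s * (μ' t * s) := by gcongr
        _ = s * (μ s * μ' t) := by ring
        _ ≤ b * (μ s * μ' t) := by gcongr
  exact key

lemma projVal_ratio {π ν : Type} (I : PB π ν)
    (μ μ' : ℝ → ℝ) (hμ : IsDNS μ) (hμ' : IsDNS μ') (p q : π) (hp : p ∈ I.projs)
    (hq : q ∈ I.projs) (h : I.projVal μ' q ≤ I.projVal μ' p) :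
    I.cmin / I.cmax * I.projVal μ q ≤ I.projVal μ p := by
  have cp := I.cost_pos p hp
  have cq := I.cost_pos q hq
  have hmin : 0 < I.cmin := by
    unfold cmin
    rw [Finset.lt_inf'_iff]
    exact I.cost_pos
  have hmax : 0 < I.cmax := lt_of_lt_of_le cp (Finset.le_sup' I.cost hp)
  have key := dns_ratio μ μ' hμ hμ' I.cmin I.cmax (I.cost p) (I.cost q) hmin
    (Finset.inf'_le I.cost hp) (Finset.inf'_le I.cost hq)
    (Finset.le_sup' I.cost hp) (Finset.le_sup' I.cost hq)
  unfold projVal at *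
  have mp := hμ.1 _ cp
  have mq := hμ.1 _ cq
  have mp' := hμ'.1 _ cp
  have mq' := hμ'.1 _ cq
  rw [div_le_div_iff₀ cq cp] at h
  rw [div_mul_div_comm, div_le_div_iff₀ (by positivity) cp]
  have hnp : (0:ℝ) ≤ ((I.supp p).card : ℝ) := by positivity
  have hnq : (0:ℝ) ≤ ((I.supp q).card : ℝ) := by positivity
  generalize ((I.supp p).card : ℝ) = np at *
  generalize ((I.supp q).card : ℝ) = nq at *
  generalize I.cost p = x at *
  generalize I.cost q = y at *
  refine le_of_mul_le_mul_right ?_ mq'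
  calc I.cmin * (nq * μ y) * x * μ' y = (I.cmin * μ y) * (nq * μ' y * x) := by ring
    _ ≤ (I.cmin * μ y) * (np * μ' x * y) := by gcongr
    _ = (np * y) * (I.cmin * (μ y * μ' x)) := by ring
    _ ≤ (np * y) * (I.cmax * (μ x * μ' y)) := by gcongr
    _ = _ := by ring

lemma final_arith (α r b M u0 u1 w x0 x1 z c0 : ℝ) (hα0 : 0 ≤ α) (hα1 : α ≤ 1)
    (hr0 : 0 ≤ r) (hr1 : r ≤ 1) (hM : 0 ≤ M) (hx0 : 0 ≤ x0) (hx1 : 0 ≤ x1)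
    (hu1 : 0 ≤ u1) (hu0 : r * M * x0 ≤ u0) (hw : r * M * (c0 - x0) ≤ w)
    (hc : α * b ≤ c0) (hz : x0 + x1 + z ≤ b) :
    α * r * (u0 + u1 + M * z) ≤ u0 + u1 + w := by
  have har : α * r ≤ 1 := by nlinarith
  have har0 : 0 ≤ α * r := by positivity
  have hrM : 0 ≤ r * M := by positivity
  have a1 : 0 ≤ (1 - α * r) * u1 := mul_nonneg (by linarith) hu1
  have a2 : 0 ≤ (1 - α * r) * (u0 - r * M * x0) := mul_nonneg (by linarith) (by linarith)
  have a3 : 0 ≤ (r * M) * (c0 - α * b) := mul_nonneg hrM (by linarith)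
  have a4 : 0 ≤ (r * M * α) * (b - x0 - x1 - z) := mul_nonneg (by positivity) (by linarith)
  have a5 : 0 ≤ (r * M * α) * x1 := by positivity
  have a6 : 0 ≤ (r * M * α * x0) * (1 - r) := mul_nonneg (by positivity) (by linarith)
  nlinarith

end PB

/-- Utilitarian guarantee of Greedy run with an "incorrect" DNS satisfaction
function `μ'`, measured w.r.t. the actual DNS satisfaction function `μ`. -/
theorem greedy_incorrect_satisfaction_guarantee {π ν : Type} [LinearOrder π] (I : PB π ν)
    (μ μ' : ℝ → ℝ) (hμ : IsDNS μ) (hμ' : IsDNS μ') :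
    ∀ Pstar : Finset π, I.feasibleSet Pstar →
      I.uw μ (I.greedy μ') ≥
        ((I.budget - I.cmax) / I.budget) * (I.cmin / I.cmax) * I.uw μ Pstar := by
  rintro P ⟨hPs, hPc⟩
  have hGmem : ∀ p, p ∈ I.greedy μ' ↔ p ∈ I.greedySeq μ' := by
    intro p; unfold PB.greedy; exact List.mem_toFinset
  have hGs : I.greedy μ' ⊆ I.projs := fun p hp =>
    PB.greedyAux_mem I μ' _ _ _ p ((hGmem p).1 hp)
  have hpre := PB.greedyAux_prefix I μ' I.projs.card I.projs I.budget le_rfl subset_rfl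
    (P \ I.greedy μ')
  change _ → (∀ q ∈ _, q ∈ _ ∧ q ∉ I.greedySeq μ') → ∃ G0 : Finset π,
    (∀ p ∈ G0, p ∈ I.greedySeq μ') ∧ _ at hpre
  simp only [← hGmem] at hpre
  generalize I.greedy μ' = G at *
  have hb := I.budget_pos
  have hmin : 0 < I.cmin := by
    unfold PB.cmin
    rw [Finset.lt_inf'_iff]
    exact I.cost_pos
  have hmm : I.cmin ≤ I.cmax := by
    obtain ⟨p, hp⟩ := I.projs_nonempty
    exact (Finset.inf'_le I.cost hp).trans (Finset.le_sup' I.cost hp)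
  have hmaxb : I.cmax ≤ I.budget := Finset.sup'_le _ _ I.cost_le_budget
  have hmax : 0 < I.cmax := by linarith
  have hα0 : 0 ≤ (I.budget - I.cmax) / I.budget := div_nonneg (by linarith) hb.le
  have hα1 : (I.budget - I.cmax) / I.budget ≤ 1 := by rw [div_le_one hb]; linarith
  have hαb : (I.budget - I.cmax) / I.budget * I.budget = I.budget - I.cmax := by field_simp
  have hr0 : 0 ≤ I.cmin / I.cmax := by positivity
  have hr1 : I.cmin / I.cmax ≤ 1 := by rw [div_le_one hmax]; linarith
  have hval : ∀ p ∈ I.projs, ((I.supp p).card : ℝ) * μ (I.cost p) = I.projVal μ p * I.cost p := by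
    intro p hp
    have := I.cost_pos p hp
    unfold PB.projVal
    field_simp
  have hnn : ∀ p ∈ I.projs, 0 ≤ ((I.supp p).card : ℝ) * μ (I.cost p) := fun p hp =>
    mul_nonneg (by positivity) (hμ.1 _ (I.cost_pos p hp)).le
  have hQ : ∃ G0 : Finset π, G0 ⊆ G ∧ ∃ M : ℝ, 0 ≤ M ∧ (∀ q ∈ P \ G, I.projVal μ q ≤ M) ∧
      (∀ p ∈ G0, I.cmin / I.cmax * M ≤ I.projVal μ p) ∧
      (M = 0 ∨ I.budget - I.cmax ≤ I.costOf G0) := by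
    by_cases hne : (P \ G).Nonempty
    · obtain ⟨G0, h1, h2, h3⟩ := hpre hne (fun q hq =>
        ⟨hPs (Finset.mem_sdiff.mp hq).1, (Finset.mem_sdiff.mp hq).2⟩)
      obtain ⟨m, hm, hmx⟩ := Finset.exists_max_image (P \ G) (I.projVal μ) hne
      have hmp := hPs (Finset.mem_sdiff.mp hm).1
      refine ⟨G0, h1, I.projVal μ m, div_nonneg (hnn m hmp) (I.cost_pos m hmp).le, hmx, ?_,
        Or.inr h3⟩
      intro p hp
      exact PB.projVal_ratio I μ μ' hμ hμ' p m (hGs (h1 p hp)) hmp (h2 p hp m hm)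
    · rw [Finset.not_nonempty_iff_eq_empty] at hne
      exact ⟨∅, by simp, 0, le_rfl, by simp [hne], by simp, Or.inl rfl⟩
  obtain ⟨G0, hG0, M, hM, hMq, hMp, hc⟩ := hQ
  set w : π → ℝ := fun p => ((I.supp p).card : ℝ) * μ (I.cost p) with hw
  unfold PB.uw PB.costOf at *
  change ∑ p ∈ G, w p ≥ _ * ∑ p ∈ P, w p
  have hX0 : (P ∩ G) ∩ G0 ⊆ I.projs := fun p hp => hGs (hG0 (Finset.mem_inter.mp hp).2)
  have hX1 : (P ∩ G) \ G0 ⊆ I.projs := fun p hp =>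
    hPs (Finset.mem_inter.mp (Finset.mem_sdiff.mp hp).1).1
  have hZ : P \ G ⊆ I.projs := fun p hp => hPs (Finset.mem_sdiff.mp hp).1
  have hW : G0 \ (P ∩ G) ⊆ I.projs := fun p hp => hGs (hG0 (Finset.mem_sdiff.mp hp).1)
  have hsplit : ∀ f : π → ℝ, ∑ p ∈ P, f p =
      ∑ p ∈ (P ∩ G) ∩ G0, f p + ∑ p ∈ (P ∩ G) \ G0, f p + ∑ p ∈ P \ G, f p := by
    intro f
    rw [Finset.sum_inter_add_sum_sdiff, Finset.sum_inter_add_sum_sdiff]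
  have hG0split : ∑ p ∈ G0, I.cost p =
      ∑ p ∈ (P ∩ G) ∩ G0, I.cost p + ∑ p ∈ G0 \ (P ∩ G), I.cost p := by
    rw [Finset.inter_comm (P ∩ G) G0, Finset.sum_inter_add_sum_sdiff]
  have hGw : ∑ p ∈ (P ∩ G) ∩ G0, w p + ∑ p ∈ (P ∩ G) \ G0, w p + ∑ p ∈ G0 \ (P ∩ G), w p
      ≤ ∑ p ∈ G, w p := by
    rw [Finset.sum_inter_add_sum_sdiff, ← Finset.sum_union Finset.disjoint_sdiff]
    refine Finset.sum_le_sum_of_subset_of_nonneg ?_ (fun i hi _ => hnn i (hGs hi))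
    exact Finset.union_subset Finset.inter_subset_right (Finset.sdiff_subset.trans hG0)
  have hzle : ∑ p ∈ P \ G, w p ≤ M * ∑ p ∈ P \ G, I.cost p := by
    rw [Finset.mul_sum]
    refine Finset.sum_le_sum fun p hp => ?_
    rw [hw]; simp only; rw [hval p (hZ hp)]
    exact mul_le_mul_of_nonneg_right (hMq p hp) (I.cost_pos p (hZ hp)).le
  have hlow : ∀ S ⊆ G0, (I.cmin / I.cmax * M) * ∑ p ∈ S, I.cost p ≤ ∑ p ∈ S, w p := by
    intro S hS
    rw [Finset.mul_sum]
    refine Finset.sum_le_sum fun p hp => ?_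
    have hpp := hGs (hG0 (hS hp))
    rw [hw]; simp only; rw [hval p hpp]
    exact mul_le_mul_of_nonneg_right (hMp p (hS hp)) (I.cost_pos p hpp).le
  have hl0 := hlow _ (Finset.inter_subset_right : (P ∩ G) ∩ G0 ⊆ G0)
  have hl1 := hlow _ (Finset.sdiff_subset : G0 \ (P ∩ G) ⊆ G0)
  have hx0 : 0 ≤ ∑ p ∈ (P ∩ G) ∩ G0, I.cost p :=
    Finset.sum_nonneg fun p hp => (I.cost_pos p (hX0 hp)).le
  have hx1 : 0 ≤ ∑ p ∈ (P ∩ G) \ G0, I.cost p :=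
    Finset.sum_nonneg fun p hp => (I.cost_pos p (hX1 hp)).le
  have hu0 : 0 ≤ ∑ p ∈ (P ∩ G) ∩ G0, w p := Finset.sum_nonneg fun p hp => hnn p (hX0 hp)
  have hu1 : 0 ≤ ∑ p ∈ (P ∩ G) \ G0, w p := Finset.sum_nonneg fun p hp => hnn p (hX1 hp)
  have hww : 0 ≤ ∑ p ∈ G0 \ (P ∩ G), w p := Finset.sum_nonneg fun p hp => hnn p (hW hp)
  rw [hsplit I.cost] at hPc
  rw [hsplit w]
  rw [hG0split] at hc
  refine le_trans ?_ hGw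
  refine le_trans (mul_le_mul_of_nonneg_left (add_le_add_right hzle _) (mul_nonneg hα0 hr0)) ?_
  rcases hc with hc | hc
  · subst hc
    refine PB.final_arith _ _ I.budget 0 _ _ _ 0 0 0 I.budget hα0 hα1 hr0 hr1 le_rfl le_rfl le_rfl hu1
      (by simpa using hu0) (by simpa using hww) (by linarith) (by linarith) |>.trans' ?_
    simp
  · exact PB.final_arith _ _ I.budget M _ _ _ _ _ _ _ hα0 hα1 hr0 hr1 hM hx0 hx1 hu1 hl0
      (by rw [add_sub_cancel_left]; exact hl1) (by rw [hαb]; exact hc) hPc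
end
end
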